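/- Let B be a supersoluble brace and let I be an ideal of B. (1) If I ⊆ Z(B,+) and I has prime order, then I ⊆ Soc(B). (2) If I is an abelian brace (both operations of I coincide and are commutative) and (I,+) is infinite cyclic, then I ⊆ Soc(B). -/

import Mathlib

/-- A (skew left) brace: a set with an additive group structure (not necessarily abelian)
and a multiplicative group structure sharing the same identity, satisfying the skew
distributive law `a * (b + c) = a * b + -a + a * c`. -/
class SkewBrace (B : Type*) extends AddGroup B, Group B where
  one_eq_zero : (1 : B) = (0 : B)
  skew_distrib : ∀ a b c : B, a * (b + c) = a * b + -a + a * c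

/-- A group is supersoluble if it has a finite chain of normal subgroups with all
factors cyclic. -/
def Group.IsSupersoluble (G : Type*) [Group G] : Prop :=
  ∃ (n : ℕ) (H : ℕ → Subgroup G),
    H 0 = ⊥ ∧ H n = ⊤ ∧ (∀ i, (H i).Normal) ∧ (∀ i, i < n → H i ≤ H (i + 1)) ∧
    ∀ i, i < n → ∃ x ∈ H (i + 1), ∀ y ∈ H (i + 1), ∃ k : ℤ, (x ^ k)⁻¹ * y ∈ H i

namespace SkewBrace

variable {B : Type*} [SkewBrace B]

/-- `lam a b = -a + a * b`, i.e. `λ_a(b)`. -/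
def lam (a b : B) : B := -a + a * b

/-- the star operation `a ∗ b = λ_a(b) - b`. -/
def starOp (a b : B) : B := lam a b + -b

/-- the additive commutator `[a,b]_+`. -/
def addCommutator (a b : B) : B := -a + -b + a + b

/-- A subbrace of `B`: a subset that is a subgroup of both `(B,+)` and `(B,·)`. -/
structure Subbrace (B : Type*) [SkewBrace B] where
  carrier : Set B
  zero_mem : (0 : B) ∈ carrier
  add_mem : ∀ {a b : B}, a ∈ carrier → b ∈ carrier → a + b ∈ carrier
  neg_mem : ∀ {a : B}, a ∈ carrier → -a ∈ carrier
  mul_mem : ∀ {a b : B}, a ∈ carrier → b ∈ carrier → a * b ∈ carrier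
  inv_mem : ∀ {a : B}, a ∈ carrier → a⁻¹ ∈ carrier

/-- An ideal of `B`: a subbrace that is normal in `(B,+)` and in `(B,·)` and is
invariant under all the maps `λ_b`. -/
structure BraceIdeal (B : Type*) [SkewBrace B] extends Subbrace B where
  addConj_mem : ∀ (b : B) {a : B}, a ∈ carrier → b + a + -b ∈ carrier
  mulConj_mem : ∀ (b : B) {a : B}, a ∈ carrier → b * a * b⁻¹ ∈ carrier
  lam_mem : ∀ (b : B) {a : B}, a ∈ carrier → lam b a ∈ carrier

/-- The additive subgroup underlying a subbrace. -/
def Subbrace.addSubgroup (S : Subbrace B) : AddSubgroup B where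
  carrier := S.carrier
  zero_mem' := S.zero_mem
  add_mem' := S.add_mem
  neg_mem' := S.neg_mem

/-- The multiplicative subgroup underlying a subbrace. -/
def Subbrace.subgroup (S : Subbrace B) : Subgroup B where
  carrier := S.carrier
  one_mem' := by rw [one_eq_zero]; exact S.zero_mem
  mul_mem' := S.mul_mem
  inv_mem' := S.inv_mem

/-- Given ideals `J ≤ I` of `B`, `MemSocQuotRel I J x` says that the coset of `x`
lies in `Soc(I/J) = Ker(λ) ∩ Z(I/J, +)` (for `I = B` take `I = Set.univ`). -/
def MemSocQuotRel (I J : Set B) (x : B) : Prop :=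
  x ∈ I ∧ (∀ y ∈ I, -y + lam x y ∈ J) ∧ ∀ y ∈ I, -(y + x) + (x + y) ∈ J

/-- Given ideals `J ≤ I` of `B`, `MemZetaQuotRel I J x` says that the coset of `x`
lies in `ζ(I/J) = Soc(I/J) ∩ Z(I/J, ·)`. -/
def MemZetaQuotRel (I J : Set B) (x : B) : Prop :=
  MemSocQuotRel I J x ∧ ∀ y ∈ I, (y * x)⁻¹ * (x * y) ∈ J

/-- The coset of `x` lies in `Soc(B/J)`. -/
def MemSocQuot (J : Set B) (x : B) : Prop := MemSocQuotRel Set.univ J x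

/-- The coset of `x` lies in `ζ(B/J)`. -/
def MemZetaQuot (J : Set B) (x : B) : Prop := MemZetaQuotRel Set.univ J x

/-- For ideals `I ≤ J`, the additive group of the quotient `J/I` is infinite cyclic. -/
def QuotAddInfCyclic (I J : Set B) : Prop :=
  ∃ x ∈ J, (∀ y ∈ J, ∃ n : ℤ, -(n • x) + y ∈ I) ∧ ∀ n : ℤ, n • x ∈ I → n = 0

/-- For ideals `I ≤ J`, the quotient `J/I` has prime order `p`. -/
def QuotPrimeOrder (I J : Set B) (p : ℕ) : Prop :=
  p.Prime ∧ ∃ x ∈ J, x ∉ I ∧ p • x ∈ I ∧ ∀ y ∈ J, ∃ n : ℤ, -(n • x) + y ∈ I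

/-- A brace is supersoluble if it has a finite chain of ideals each factor of which
either is additively infinite cyclic and contained in the socle of the corresponding
quotient, or has prime order. -/
def IsSupersoluble (B : Type*) [SkewBrace B] : Prop :=
  ∃ (n : ℕ) (I : ℕ → BraceIdeal B),
    (I 0).carrier = {0} ∧ (I n).carrier = Set.univ ∧
    (∀ i, i < n → (I i).carrier ⊆ (I (i + 1)).carrier) ∧
    ∀ i, i < n →
      (QuotAddInfCyclic (I i).carrier (I (i + 1)).carrier ∧
        ∀ x ∈ (I (i + 1)).carrier, MemSocQuot (I i).carrier x) ∨
      ∃ p : ℕ, QuotPrimeOrder (I i).carrier (I (i + 1)).carrier p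

/-- The upper socle series of the brace (carrier of the ideal) `I`. -/
def socChainRel (I : Set B) : ℕ → Set B
  | 0 => {0}
  | n + 1 => {x | MemSocQuotRel I (socChainRel I n) x}

/-- The upper central series of the brace (carrier of the ideal) `I`. -/
def zetaChainRel (I : Set B) : ℕ → Set B
  | 0 => {0}
  | n + 1 => {x | MemZetaQuotRel I (zetaChainRel I n) x}

/-- The upper socle series `Soc_n(B)` of `B`. -/
def socChain (B : Type*) [SkewBrace B] : ℕ → Set B := socChainRel Set.univ

/-- The upper central series `ζ_n(B)` of `B`. -/
def zetaChain (B : Type*) [SkewBrace B] : ℕ → Set B := zetaChainRel Set.univ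

/-- A brace is centrally nilpotent if its upper central series reaches `B`. -/
def IsCentrallyNilpotent (B : Type*) [SkewBrace B] : Prop :=
  ∃ m : ℕ, zetaChain B m = Set.univ

end SkewBrace

namespace SkewBrace

section helpers
variable {B : Type*} [SkewBrace B]

theorem aux_mul_eq (a b : B) : a * b = a + lam a b := by simp [lam]

theorem aux_lam_add (a b c : B) : lam a (b + c) = lam a b + lam a c := by
  simp [lam, skew_distrib, add_assoc]

theorem aux_lam_mul (a b c : B) : lam (a * b) c = lam a (lam b c) := by
  have h : a * (b * c) = a * b + lam a (lam b c) := by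
    rw [aux_mul_eq b c, aux_mul_eq a (b + _), aux_lam_add, ← add_assoc, ← aux_mul_eq]
  rw [← mul_assoc, aux_mul_eq (a * b)] at h
  exact add_left_cancel h

/-- For `x` in an ideal, `-b + lam x b` lies in the ideal. -/
theorem aux_lam_mem (I : BraceIdeal B) {x : B} (hx : x ∈ I.carrier) (b : B) :
    -b + lam x b ∈ I.carrier := by
  have h1 : x * b = b * (b⁻¹ * x * b⁻¹⁻¹) := by group
  have h2 : -b + lam x b = (-b + -x + - -b) + lam b (b⁻¹ * x * b⁻¹⁻¹) := by
    unfold lam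
    rw [← h1]
    simp [add_assoc]
  rw [h2]
  exact I.add_mem (I.addConj_mem _ (I.neg_mem hx)) (I.lam_mem _ (I.mulConj_mem _ hx))

theorem aux_comm_mem (I : BraceIdeal B) {x : B} (hx : x ∈ I.carrier) (b : B) :
    -(b + x) + (x + b) ∈ I.carrier := by
  have h2 : -(b + x) + (x + b) = -x + (-b + x + - -b) := by simp [add_assoc]
  rw [h2]
  exact I.add_mem (I.neg_mem hx) (I.addConj_mem _ hx)

theorem aux_part_one (I : BraceIdeal B)
    (hc : ∀ x ∈ I.carrier, ∀ b : B, x + b = b + x)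
    (hp : ∃ p : ℕ, p.Prime ∧ Nat.card I.carrier = p) :
    ∀ x ∈ I.carrier, MemSocQuot ({0} : Set B) x := by
  obtain ⟨p, hp, hcard⟩ := hp
  intro x hx
  refine ⟨trivial, ?_, ?_⟩
  swap
  · intro y _
    rw [hc x hx y]
    simp
  let g : B →+ I.addSubgroup := AddMonoidHom.mk' (fun b => ⟨-b + lam x b, aux_lam_mem I hx b⟩) (by
    intro b c
    apply Subtype.ext
    change -(b + c) + lam x (b + c) = (-b + lam x b) + (-c + lam x c)
    rw [aux_lam_add, neg_add_rev, ← add_assoc (-b + lam x b) (-c),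
      hc _ (aux_lam_mem I hx b)]
    simp [add_assoc])
  have : Fact (Nat.card I.addSubgroup).Prime := ⟨by
    change (Nat.card I.carrier).Prime
    rw [hcard]; exact hp⟩
  rcases g.range.eq_bot_or_eq_top_of_prime_card with h | h
  · intro y _
    have h1 : g y ∈ g.range := ⟨y, rfl⟩
    rw [h, AddSubgroup.mem_bot] at h1
    exact congrArg Subtype.val h1
  · have h1 : (⟨-x, I.neg_mem hx⟩ : I.addSubgroup) ∈ g.range := by rw [h]; trivial
    obtain ⟨c, hcc⟩ := h1
    have h2 : -c + lam x c = -x := congrArg Subtype.val hcc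
    have h3 : x * c = c := by
      rw [aux_mul_eq, ← add_neg_cancel_left c (lam x c), h2, ← hc _ (I.neg_mem hx)]
      simp
    have h4 : x = 1 := by simpa using h3
    intro y _
    rw [h4]
    simp [lam, one_eq_zero (B := B)]
    rw [← one_eq_zero (B := B), one_mul]
    simp [one_eq_zero (B := B)]

theorem aux_exists (hB : IsSupersoluble B) (I : BraceIdeal B) (x : B) (hx : x ∈ I.carrier)
    (hgen : ∀ y ∈ I.carrier, ∃ n : ℤ, y = n • x) (hinf : ∀ n : ℤ, n • x = 0 → n = 0) :
    ∃ y ∈ I.carrier, y ≠ 0 ∧ MemSocQuot ({0} : Set B) y := by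
  obtain ⟨n, J, h0, hn, hsub, hstep⟩ := hB
  by_contra hno
  have key : ∀ k, k ≤ n → ∀ y ∈ I.carrier, y ∈ (J k).carrier → y = 0 := by
    intro k
    induction k with
    | zero => intro _ y _ hy; rw [h0] at hy; exact hy
    | succ k ih =>
      intro hk y hyI hyJ
      have ih := ih (by omega)
      by_contra hy0
      rcases hstep k (by omega) with ⟨_, hs⟩ | ⟨p, hp, z, hz, hzn, hpz, hzg⟩
      · obtain ⟨_, hs1, hs2⟩ := hs y hyJ
        exact hno ⟨y, hyI, hy0, trivial,
          fun b _ => ih _ (aux_lam_mem I hyI b) (hs1 b trivial),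
          fun b _ => ih _ (aux_comm_mem I hyI b) (hs2 b trivial)⟩
      · obtain ⟨m, hm⟩ := hzg y hyJ
        let A : AddSubgroup B := (J k).addSubgroup
        have : A.Normal := ⟨fun a ha g => (J k).addConj_mem g ha⟩
        have e1 : ((m • z : B) : B ⧸ A) = (y : B ⧸ A) := QuotientAddGroup.eq.2 hm
        have e2 : ((p • z : B) : B ⧸ A) = 0 := (QuotientAddGroup.eq_zero_iff _).2 hpz
        have e3 : ((p • y : B) : B ⧸ A) = 0 := by
          rw [QuotientAddGroup.mk_nsmul, ← e1, QuotientAddGroup.mk_zsmul, ← natCast_zsmul,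
            smul_comm, natCast_zsmul, ← QuotientAddGroup.mk_nsmul, e2, smul_zero]
        have e4 : p • y ∈ (J k).carrier := (QuotientAddGroup.eq_zero_iff _).1 e3
        have e5 : p • y ∈ I.carrier := I.addSubgroup.nsmul_mem hyI p
        have e6 := ih _ e5 e4
        obtain ⟨N, rfl⟩ := hgen y hyI
        rw [← natCast_zsmul, ← mul_zsmul] at e6
        have e7 := hinf _ e6
        have : N = 0 := by
          rcases mul_eq_zero.1 e7 with h | h
          · first | exact h | exact absurd (by exact_mod_cast h) hp.ne_zero
          · first | exact h | exact absurd (by exact_mod_cast h) hp.ne_zero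
        exact hy0 (by simp [this])
  have hx0 := key n le_rfl x hx (by rw [hn]; trivial)
  have := hinf 1 (by simp [hx0])
  omega

theorem aux_part_two (hB : IsSupersoluble B) (I : BraceIdeal B)
    (hab : ∀ x ∈ I.carrier, ∀ y ∈ I.carrier, x * y = x + y ∧ x + y = y + x)
    (hcyc : ∃ x ∈ I.carrier, (∀ y ∈ I.carrier, ∃ n : ℤ, y = n • x) ∧
        ∀ n : ℤ, n • x = 0 → n = 0) :
    ∀ x ∈ I.carrier, MemSocQuot ({0} : Set B) x := by
  obtain ⟨x, hx, hgen, hinf⟩ := hcyc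
  obtain ⟨y, hyI, hy0, _, hy1, hy2⟩ := aux_exists hB I x hx hgen hinf
  obtain ⟨N, rfl⟩ := hgen y hyI
  have hN : N ≠ 0 := by rintro rfl; simp at hy0
  -- torsion-freeness on I
  have tf : ∀ (M : ℤ), M ≠ 0 → ∀ z ∈ I.carrier, M • z = 0 → z = 0 := by
    intro M hM z hz h
    obtain ⟨m, rfl⟩ := hgen z hz
    rw [← mul_zsmul] at h
    rcases mul_eq_zero.1 (hinf _ h) with h | h
    · first | exact absurd h hM | simp [h]
    · first | exact absurd h hM | simp [h]
  -- an additive map on I killing N • x kills I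
  have kill : ∀ g : I.addSubgroup →+ I.addSubgroup,
      g (N • ⟨x, hx⟩) = 0 → ∀ z, g z = 0 := by
    intro g hg z
    obtain ⟨m, hm⟩ := hgen z z.2
    have hz : z = m • (⟨x, hx⟩ : I.addSubgroup) := Subtype.ext hm
    rw [map_zsmul] at hg
    have h1 : g ⟨x, hx⟩ = 0 :=
      Subtype.ext (tf N hN _ (g ⟨x, hx⟩).2 (congrArg Subtype.val hg))
    rw [hz, map_zsmul, h1, smul_zero]
  intro z hz
  refine ⟨trivial, fun b _ => ?_, fun b _ => ?_⟩
  · let g : I.addSubgroup →+ I.addSubgroup :=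
      AddMonoidHom.mk' (fun u => ⟨-b + lam u.1 b, aux_lam_mem I u.2 b⟩) (by
        intro u v
        apply Subtype.ext
        change -b + lam (u.1 + v.1) b = (-b + lam u.1 b) + (-b + lam v.1 b)
        have hv := aux_lam_mem I v.2 b
        have h1 : lam u.1 (-b + lam v.1 b) = -b + lam v.1 b := by
          rw [lam, (hab u.1 u.2 _ hv).1]; simp
        rw [← (hab u.1 u.2 v.1 v.2).1, aux_lam_mul]
        conv_lhs => rw [← add_neg_cancel_left b (lam v.1 b), aux_lam_add, h1]
        simp [add_assoc])
    exact congrArg Subtype.val (kill g (Subtype.ext (hy1 b trivial)) ⟨z, hz⟩)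
  · let g : I.addSubgroup →+ I.addSubgroup :=
      AddMonoidHom.mk' (fun u => ⟨-(b + u.1) + (u.1 + b), aux_comm_mem I u.2 b⟩) (by
        intro u v
        apply Subtype.ext
        change -(b + (u.1 + v.1)) + (u.1 + v.1 + b)
          = (-(b + u.1) + (u.1 + b)) + (-(b + v.1) + (v.1 + b))
        have h1 := (hab (-v.1) (I.neg_mem v.2) _ (aux_comm_mem I u.2 b)).2
        have h2 : -(b + (u.1 + v.1)) + (u.1 + v.1 + b)
          = (-v.1 + (-(b + u.1) + (u.1 + b))) + (-b + v.1 + b) := by simp [add_assoc]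
        rw [h2, h1]
        simp [add_assoc])
    exact congrArg Subtype.val (kill g (Subtype.ext (hy2 b trivial)) ⟨z, hz⟩)

end helpers


/-- Let `B` be a supersoluble brace and `I` an ideal of `B`.
(1) If `I ⊆ Z(B,+)` and `I` has prime order, then `I ⊆ Soc(B)`.
(2) If `I` is an abelian brace and `(I,+)` is infinite cyclic, then `I ⊆ Soc(B)`.
(Here `x ∈ Soc(B)` is expressed as `MemSocQuot {0} x`.) -/
theorem ideal_le_soc (B : Type*) [SkewBrace B] (hB : IsSupersoluble B)
    (I : BraceIdeal B) :
    ((∀ x ∈ I.carrier, ∀ b : B, x + b = b + x) →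
      (∃ p : ℕ, p.Prime ∧ Nat.card I.carrier = p) →
      ∀ x ∈ I.carrier, MemSocQuot ({0} : Set B) x) ∧
    ((∀ x ∈ I.carrier, ∀ y ∈ I.carrier, x * y = x + y ∧ x + y = y + x) →
      (∃ x ∈ I.carrier, (∀ y ∈ I.carrier, ∃ n : ℤ, y = n • x) ∧
        ∀ n : ℤ, n • x = 0 → n = 0) →
      ∀ x ∈ I.carrier, MemSocQuot ({0} : Set B) x) := by
  exact ⟨aux_part_one I, aux_part_two hB I⟩

end SkewBrace
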